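/- In the blow-up setup with the concentration hypothesis: for every γ ∈ (0, n−2k) there exists C > 0 such that, for all sufficiently large i, |u_i(x)| ≤ C·ν_i^{(n−2k)/2−γ}/|x|^{n−2k−γ} for all x ∈ B with |x| ≥ ν_i. -/

import Mathlib

/-!
Write `δ = (n - 2k) / 2` and let `h(ρ) = ν ^ δ u(ν ρ e)`, with `e` a unit vector, be the rescaled
profile of `u = u_i` on `1 ≤ ρ ≤ 1 / ν`. The asserted inequality says that `|h| ≤ C ρ ^ (-κ)` with
`κ = n - 2k - γ`, an arbitrary exponent in `(0, n - 2k)`.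

On radial functions `r ^ (2k) Δ^k` is a product of commuting Euler operators `φ ↦ r φ' - s φ`, with
exponents `s = 2j` and `s = 2j + 2 - n` for `0 ≤ j < k` (`iterLap_radial`, `lapList_perm`). Hence `k`
exponents are nonnegative, `k` exponents are at most `-(n - 2k)`, and `-κ` lies in the gap between
them. A factor with `s > -κ` is inverted by integrating from the right end `L = 1 / ν`, where the `k`
Dirichlet conditions make every boundary term vanish; a factor with `s < -κ` is inverted by
integrating from the left end `R`, where the data are bounded because of the local convergence of
the rescaled functions (`prof_data`). This gives the a priori estimate `eulL_estimate` in the norm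
`sup ρ ^ κ |h|`, in which the constant in front of the right-hand side depends neither on `R` nor
on `L`.

By the equation, the right-hand side is at most `(lam + (ρ ^ δ |h|) ^ (2* - 2)) |h|`
(`prof_equation`). The energy bound controls `(ρ ^ δ |h|) ^ 2*` in `L¹(dρ / ρ)`, and the a priori
estimate with `κ = δ` then bounds `ρ ^ δ |h|` uniformly (`prof_bounded`). The suprema in the
concentration hypothesis are therefore suprema of bounded families, and the hypothesis makes
`ρ ^ δ |h|` as small as desired for `ρ > R`, with `R` large (`prof_small`). For such `R` and large `i`
the coefficient of `|h|` is so small that the right-hand side is absorbed in the a priori estimate,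
which leaves only the data at `R` (`prof_decay`). Neither the sign of the profile nor the sign
convention for `Δ` plays a role.
-/

open MeasureTheory Metric Filter Topology Real

noncomputable section

def lap {n : ℕ} (u : EuclideanSpace ℝ (Fin n) → ℝ) : EuclideanSpace ℝ (Fin n) → ℝ :=
  fun x => ∑ i : Fin n, iteratedFDeriv ℝ 2 u x (fun _ => EuclideanSpace.single i 1)

def iterLap {n : ℕ} (k : ℕ) (u : EuclideanSpace ℝ (Fin n) → ℝ) :
    EuclideanSpace ℝ (Fin n) → ℝ :=
  lap^[k] u

def twoStar (n k : ℕ) : ℝ := 2 * n / ((n : ℝ) - 2 * k)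

def ank (n k : ℕ) : ℝ :=
  (∏ j ∈ Finset.range (2 * k), ((n : ℝ) + 2 * ((j : ℝ) - (k : ℝ)))) ^ (-(1 : ℝ) / (k : ℝ))

def Ubub (n k : ℕ) (x : EuclideanSpace ℝ (Fin n)) : ℝ :=
  (1 / (1 + ank n k * ‖x‖ ^ 2)) ^ (((n : ℝ) - 2 * k) / 2)

def BlowUpSetup (n k : ℕ) (M : ℝ) (lam : ℕ → ℝ)
    (u : ℕ → EuclideanSpace ℝ (Fin n) → ℝ) : Prop :=
  (∀ i, 0 < lam i) ∧ Filter.Tendsto lam Filter.atTop (nhds 0) ∧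
  (∀ i, ContDiff ℝ (2 * k : ℕ) (u i)) ∧
  (∀ i, ∀ x y : EuclideanSpace ℝ (Fin n), ‖x‖ = ‖y‖ → u i x = u i y) ∧
  (∀ i, ∀ x ∈ Metric.ball (0 : EuclideanSpace ℝ (Fin n)) 1,
    iterLap k (u i) x - lam i * u i x = |u i x| ^ (twoStar n k - 2) * u i x) ∧
  (∀ i, ∀ x : EuclideanSpace ℝ (Fin n), ‖x‖ = 1 → ∀ j < k,
    iteratedFDeriv ℝ j (u i) x (fun _ => x) = 0) ∧
  (∀ i, ∃ x ∈ Metric.closedBall (0 : EuclideanSpace ℝ (Fin n)) 1, u i x ≠ 0) ∧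
  (∀ i, (∫ x in Metric.ball (0 : EuclideanSpace ℝ (Fin n)) 1, |u i x| ^ twoStar n k)
      ≤ M ^ twoStar n k)

def CLocConv {n : ℕ} (m : ℕ) (S : Set (EuclideanSpace ℝ (Fin n)))
    (f : ℕ → EuclideanSpace ℝ (Fin n) → ℝ) (g : EuclideanSpace ℝ (Fin n) → ℝ) : Prop :=
  ∀ K : Set (EuclideanSpace ℝ (Fin n)), K ⊆ S → IsCompact K → ∀ j ≤ m,
    Filter.Tendsto
      (fun i => ⨆ x : K, ‖iteratedFDeriv ℝ j (f i) (x : EuclideanSpace ℝ (Fin n))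
        - iteratedFDeriv ℝ j g (x : EuclideanSpace ℝ (Fin n))‖)
      Filter.atTop (nhds 0)

def Concentration (n k : ℕ) (u : ℕ → EuclideanSpace ℝ (Fin n) → ℝ)
    (ν : ℕ → ℝ) (ε₀ : ℝ) : Prop :=
  (∀ i, 0 < ν i) ∧ Filter.Tendsto ν Filter.atTop (nhds 0) ∧ (ε₀ = 1 ∨ ε₀ = -1) ∧
  CLocConv (2 * k) {(0 : EuclideanSpace ℝ (Fin n))}ᶜ
    (fun i z => (ν i) ^ (((n : ℝ) - 2 * k) / 2) * u i ((ν i) • z))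
    (fun z => ε₀ * Ubub n k z) ∧
  Filter.Tendsto (fun R : ℝ => Filter.limsup (fun i =>
      ⨆ x : {x : EuclideanSpace ℝ (Fin n) //
        x ∈ Metric.ball (0 : EuclideanSpace ℝ (Fin n)) 1 ∧ R * ν i ≤ ‖x‖},
        ‖(x : EuclideanSpace ℝ (Fin n))‖ ^ (((n : ℝ) - 2 * k) / 2)
          * |u i (x : EuclideanSpace ℝ (Fin n))|) Filter.atTop)
    Filter.atTop (nhds 0)

def Tfun (n k : ℕ) (u : EuclideanSpace ℝ (Fin n) → ℝ) (x : EuclideanSpace ℝ (Fin n)) : ℝ :=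
  (((n : ℝ) - 2 * k) / 2) * u x + fderiv ℝ u x x

def ndS {n : ℕ} (u : EuclideanSpace ℝ (Fin n) → ℝ) (x : EuclideanSpace ℝ (Fin n)) : ℝ :=
  fderiv ℝ u x (‖x‖⁻¹ • x)

def halfLapSq {n : ℕ} (k : ℕ) (u : EuclideanSpace ℝ (Fin n) → ℝ)
    (x : EuclideanSpace ℝ (Fin n)) : ℝ :=
  if k % 2 = 0 then (iterLap (k / 2) u x) ^ 2 else ‖gradient (iterLap (k / 2) u) x‖ ^ 2

def Sfun (n k : ℕ) (u : EuclideanSpace ℝ (Fin n) → ℝ) (x : EuclideanSpace ℝ (Fin n)) : ℝ :=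
  (∑ i ∈ Finset.range (k / 2),
    (-(ndS (iterLap (k - i - 1) u) x) * iterLap i (Tfun n k u) x
      + iterLap (k - i - 1) u x * ndS (iterLap i (Tfun n k u)) x))
  - (if k % 2 = 1 then ndS (iterLap (k / 2) u) x * iterLap (k / 2) (Tfun n k u) x else 0)

def sphVol (n : ℕ) : ℝ :=
  (μH[(n : ℝ) - 1] (Metric.sphere (0 : EuclideanSpace ℝ (Fin n)) 1)).toReal

def Cnk (n k : ℕ) : ℝ :=
  1 / (((n : ℝ) - 2) * sphVol n *
    ∏ i ∈ Finset.Icc 1 (k - 1), (((n : ℝ) - 2 * k + 2 * ((i : ℝ) - 1)) * (2 * (k : ℝ) - 2 * (i : ℝ))))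

/-! ### Euler operators on the half-line -/

/-- The shifted Euler operator `φ ↦ r φ' - s φ`, whose kernel on `(0, ∞)` is spanned by `r ^ s`. -/
def eul (s : ℝ) (φ : ℝ → ℝ) : ℝ → ℝ := fun r => r * deriv φ r - s * φ r

/-- The product of the operators `eul s` for `s` in a list; the last entry is applied first. -/
def eulL : List ℝ → (ℝ → ℝ) → ℝ → ℝ
  | [], φ => φ
  | s :: l, φ => eul s (eulL l φ)

lemma eulL_append (l l' : List ℝ) (φ : ℝ → ℝ) : eulL (l ++ l') φ = eulL l (eulL l' φ) := by
  induction l with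
  | nil => rfl
  | cons s l ih => simp [eulL, ih]

lemma contDiff_deriv_nat {m : ℕ} {φ : ℝ → ℝ} (h : ContDiff ℝ (m + 1 : ℕ) φ) :
    ContDiff ℝ m (deriv φ) := by
  have h' : ContDiff ℝ ((m : WithTop ℕ∞) + 1) φ := by exact_mod_cast h
  exact (contDiff_succ_iff_deriv.1 h').2.2

lemma contDiff_eul {m : ℕ} {φ : ℝ → ℝ} (s : ℝ) (h : ContDiff ℝ (m + 1 : ℕ) φ) :
    ContDiff ℝ m (eul s φ) := by
  have h1 := contDiff_deriv_nat h
  have h2 : ContDiff ℝ m φ := h.of_le (by exact_mod_cast Nat.le_succ m)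
  unfold eul
  fun_prop

lemma contDiff_eulL {m : ℕ} {φ : ℝ → ℝ} (l : List ℝ) (h : ContDiff ℝ (m + l.length : ℕ) φ) :
    ContDiff ℝ m (eulL l φ) := by
  induction l generalizing m with
  | nil => simpa [eulL] using h
  | cons s l ih =>
    refine contDiff_eul s (ih ?_)
    convert h using 2
    simp only [List.length_cons]; ring

lemma differentiable_of_contDiff_succ {m : ℕ} {φ : ℝ → ℝ} (h : ContDiff ℝ (m + 1 : ℕ) φ) :
    Differentiable ℝ φ :=
  h.differentiable (by exact_mod_cast Nat.succ_ne_zero m)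

lemma eul_comm {φ : ℝ → ℝ} (s t : ℝ) (h : ContDiff ℝ (2 : ℕ) φ) :
    eul s (eul t φ) = eul t (eul s φ) := by
  have h1 : Differentiable ℝ φ := differentiable_of_contDiff_succ (m := 1) h
  have h2 : Differentiable ℝ (deriv φ) :=
    differentiable_of_contDiff_succ (m := 0) (contDiff_deriv_nat (m := 1) h)
  have key : ∀ (t r : ℝ), HasDerivAt (eul t φ)
      (1 * deriv φ r + r * deriv (deriv φ) r - t * deriv φ r) r := fun t r =>
    ((hasDerivAt_id r).mul (h2 r).hasDerivAt).sub ((h1 r).hasDerivAt.const_mul t)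
  funext r
  show r * deriv (eul t φ) r - s * eul t φ r = r * deriv (eul s φ) r - t * eul s φ r
  rw [(key t r).deriv, (key s r).deriv]
  unfold eul
  ring

/-- The Euler operators commute, so the order of the factors is irrelevant. -/
lemma eulL_perm {l l' : List ℝ} (hp : l.Perm l') {φ : ℝ → ℝ}
    (h : ContDiff ℝ (l.length : ℕ) φ) : eulL l φ = eulL l' φ := by
  induction hp with
  | nil => rfl
  | cons s hp ih =>
    simp only [eulL]
    rw [ih (h.of_le (by simp))]
  | swap s t l =>
    simp only [eulL]
    refine eul_comm _ _ (contDiff_eulL l ?_)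
    convert h using 2
    simp only [List.length_cons]; ring
  | trans hp hq ih1 ih2 => rw [ih1 h, ih2 (hp.length_eq ▸ h)]

lemma eulL_dilate (l : List ℝ) (φ : ℝ → ℝ) (c a r : ℝ) :
    eulL l (fun r => c * φ (a * r)) r = c * eulL l φ (a * r) := by
  induction l generalizing r with
  | nil => rfl
  | cons s l ih =>
    have : eulL l (fun r => c * φ (a * r)) = fun r => c * eulL l φ (a * r) := funext ih
    simp only [eulL, eul, this]
    have hd : deriv (fun r => c * eulL l φ (a * r)) r = c * (a * deriv (eulL l φ) (a * r)) := by
      rw [deriv_const_mul_field]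
      congr 1
      exact deriv_comp_mul_left a (eulL l φ) r
    rw [hd]
    ring

/-- Differentiating the Euler operator only involves two consecutive derivatives. -/
lemma iteratedDeriv_eul (s : ℝ) (j : ℕ) {φ : ℝ → ℝ} (h : ContDiff ℝ (j + 1 : ℕ) φ) (r : ℝ) :
    iteratedDeriv j (eul s φ) r
      = r * iteratedDeriv (j + 1) φ r + (j - s) * iteratedDeriv j φ r := by
  induction j generalizing r with
  | zero => simp [eul, iteratedDeriv_one]; ring
  | succ j ih =>
    have hle : ContDiff ℝ (j + 1 : ℕ) φ := h.of_le (by exact_mod_cast Nat.le_succ _)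
    have e : iteratedDeriv j (eul s φ)
        = fun r => r * iteratedDeriv (j + 1) φ r + (j - s) * iteratedDeriv j φ r :=
      funext fun r => ih hle r
    have d1 : HasDerivAt (iteratedDeriv (j + 1) φ) (iteratedDeriv (j + 2) φ r) r := by
      rw [iteratedDeriv_succ (n := j + 1)]
      exact (h.differentiable_iteratedDeriv (j + 1) (by exact_mod_cast Nat.lt_succ_self _)
        r).hasDerivAt
    have d0 : HasDerivAt (iteratedDeriv j φ) (iteratedDeriv (j + 1) φ r) r := by
      rw [iteratedDeriv_succ (n := j)]
      exact (h.differentiable_iteratedDeriv j (by exact_mod_cast (by omega : j < j + 1 + 1))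
        r).hasDerivAt
    rw [iteratedDeriv_succ, e]
    have := ((hasDerivAt_id r).mul d1).add (d0.const_mul ((j : ℝ) - s))
    refine this.deriv.trans ?_
    push_cast
    simp only [id]
    ring

lemma iteratedDeriv_eulL_eq_zero (l : List ℝ) {N : ℕ} {φ : ℝ → ℝ} (h : ContDiff ℝ N φ) {r : ℝ}
    (h0 : ∀ j < N, iteratedDeriv j φ r = 0) {j : ℕ} (hj : j + l.length < N) :
    iteratedDeriv j (eulL l φ) r = 0 := by
  induction l generalizing j with
  | nil => exact h0 j hj
  | cons s l ih =>
    simp only [List.length_cons] at hj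
    rw [eulL, iteratedDeriv_eul, ih (by omega), ih (by omega)]
    · ring
    · exact contDiff_eulL l (h.of_le (by exact_mod_cast (by omega)))

lemma iteratedDeriv_eulL_bound (l : List ℝ) (N : ℕ) {r : ℝ} (hr : 0 < r) :
    ∃ K : ℝ, 0 < K ∧ ∀ (φ : ℝ → ℝ) (D : ℝ), ContDiff ℝ N φ →
      (∀ j ≤ N, |iteratedDeriv j φ r| ≤ D) →
      ∀ j, j + l.length ≤ N → |iteratedDeriv j (eulL l φ) r| ≤ K * D := by
  induction l with
  | nil => exact ⟨1, one_pos, fun φ D _ h j hj => by simpa [eulL] using h j (by simpa using hj)⟩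
  | cons s l ih =>
    obtain ⟨K, hK, H⟩ := ih
    refine ⟨(r + N + |s|) * K, by positivity, fun φ D hφ hD j hj => ?_⟩
    simp only [List.length_cons] at hj
    have b1 := H φ D hφ hD (j + 1) (by omega)
    have b0 := H φ D hφ hD j (by omega)
    rw [eulL, iteratedDeriv_eul s j
      (contDiff_eulL l (hφ.of_le (by exact_mod_cast (by omega))))]
    have hjN : (j : ℝ) ≤ N := by exact_mod_cast (by omega : j ≤ N)
    have hjs : |(j : ℝ) - s| ≤ N + |s| := by
      refine (abs_sub _ _).trans ?_
      rw [abs_of_nonneg (Nat.cast_nonneg j)]; linarith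
    calc _ ≤ r * |iteratedDeriv (j + 1) (eulL l φ) r|
          + |(j : ℝ) - s| * |iteratedDeriv j (eulL l φ) r| := by
          refine (abs_add_le _ _).trans ?_
          rw [abs_mul, abs_mul, abs_of_pos hr]
      _ ≤ r * (K * D) + (N + |s|) * (K * D) := by gcongr
      _ = _ := by ring

/-- One step in a stable direction `s < -κ`: the equation is integrated from the left endpoint.
The function `E` accounts for the part of the right-hand side controlled only in `L¹(dr / r)`. -/
lemma eul_forward {s κ R L A E₀ : ℝ} (hR : 0 < R) (hs : s < -κ) (hA : 0 ≤ A)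
    {w e E : ℝ → ℝ} (hw : Differentiable ℝ w) (hE : ∀ r, HasDerivAt E (e r) r)
    (hE0 : ∀ r ∈ Set.Icc R L, 0 ≤ E r ∧ E r ≤ E₀)
    (hb : ∀ r ∈ Set.Ioo R L, |eul s w r| ≤ A * r ^ (-κ) * (1 + r * e r)) :
    ∀ r ∈ Set.Icc R L,
      |w r| ≤ (R ^ κ * |w R| + A * (1 / (-κ - s) + E₀)) * r ^ (-κ) := by
  have hd : 0 < -κ - s := by linarith
  -- `r ^ (-s) * w` has derivative `r ^ (-s - 1) * eul s w`, dominated by that of `G`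
  set G : ℝ → ℝ := fun r => A * (r ^ (-κ - s) * (1 / (-κ - s) + E r)) with hG
  have dG : ∀ r, 0 < r → HasDerivAt G
      (A * (((-κ - s) * r ^ (-κ - s - 1)) * (1 / (-κ - s) + E r)
        + r ^ (-κ - s) * e r)) r := fun r hr =>
    (((Real.hasDerivAt_rpow_const (Or.inl hr.ne')).mul ((hE r).const_add _)).const_mul A)
  have dw : ∀ r, 0 < r → HasDerivAt (fun r => r ^ (-s) * w r)
      ((-s * r ^ (-s - 1)) * w r + r ^ (-s) * deriv w r) r := fun r hr =>
    (Real.hasDerivAt_rpow_const (Or.inl hr.ne')).mul (hw r).hasDerivAt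
  have hanti : ∀ c : ℝ, |c| = 1 →
      AntitoneOn (fun r => c * (r ^ (-s) * w r) - G r) (Set.Icc R L) := by
    intro c hc
    refine antitoneOn_of_deriv_nonpos (convex_Icc R L) ?_ ?_ ?_
    · intro r hr
      have h0 : 0 < r := hR.trans_le hr.1
      exact (((dw r h0).const_mul c).sub (dG r h0)).continuousAt.continuousWithinAt
    · intro r hr
      rw [interior_Icc] at hr
      have h0 : 0 < r := hR.trans hr.1
      exact (((dw r h0).const_mul c).sub (dG r h0)).differentiableAt.differentiableWithinAt
    · intro r hr
      rw [interior_Icc] at hr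
      have h0 : 0 < r := hR.trans hr.1
      have hd' := (((dw r h0).const_mul c).sub (dG r h0)).deriv
      have hEr := (hE0 r ⟨hr.1.le, hr.2.le⟩).1
      have hbr := hb r hr
      refine (le_of_eq hd').trans ?_
      have e1 : r ^ (-s) = r ^ (-s - 1) * r := by
        rw [← Real.rpow_add_one h0.ne']; ring_nf
      have e2 : r ^ (-κ - s - 1) = r ^ (-s - 1) * r ^ (-κ) := by
        rw [← Real.rpow_add h0]; ring_nf
      have e3 : r ^ (-κ - s) = r ^ (-s - 1) * r ^ (-κ) * r := by
        rw [← Real.rpow_add h0, ← Real.rpow_add_one h0.ne']; ring_nf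
      have hp : 0 < r ^ (-s - 1) := Real.rpow_pos_of_pos h0 _
      have hq : 0 < r ^ (-κ) := Real.rpow_pos_of_pos h0 _
      have hc' : c * eul s w r ≤ A * r ^ (-κ) * (1 + r * e r) :=
        (le_abs_self _).trans (by rw [abs_mul, hc, one_mul]; exact hbr)
      have e4 : c * (-s * r ^ (-s - 1) * w r + r ^ (-s) * deriv w r)
          = r ^ (-s - 1) * (c * eul s w r) := by
        rw [e1]; unfold eul; ring
      rw [e4, e2, e3]
      have h5 := mul_le_mul_of_nonneg_left hc' hp.le
      have h6 : 0 ≤ A * (r ^ (-s - 1) * r ^ (-κ)) * ((-κ - s) * E r) := by positivity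
      have h7 : (-κ - s) * (1 / (-κ - s)) = 1 := by field_simp
      have h8 : A * ((-κ - s) * (r ^ (-s - 1) * r ^ (-κ)) * (1 / (-κ - s) + E r)
            + r ^ (-s - 1) * r ^ (-κ) * r * e r)
          = A * (r ^ (-s - 1) * r ^ (-κ)) * ((-κ - s) * (1 / (-κ - s)))
            + A * (r ^ (-s - 1) * r ^ (-κ)) * ((-κ - s) * E r)
            + A * (r ^ (-s - 1) * r ^ (-κ)) * (r * e r) := by ring
      rw [h8, h7]
      nlinarith
  intro r hr
  have h0 : 0 < r := hR.trans_le hr.1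
  have hRL : R ≤ L := hr.1.trans hr.2
  have hGR : 0 ≤ G R := by
    have := (hE0 R ⟨le_rfl, hRL⟩).1
    positivity
  have hpos : 0 < r ^ (-s) := Real.rpow_pos_of_pos h0 _
  have hmain : r ^ (-s) * |w r| ≤ R ^ (-s) * |w R| + G r := by
    have h1 := hanti 1 (by simp) ⟨le_rfl, hRL⟩ hr hr.1
    have h2 := hanti (-1) (by simp) ⟨le_rfl, hRL⟩ hr hr.1
    simp only at h1 h2
    have hRs : 0 < R ^ (-s) := Real.rpow_pos_of_pos hR _
    have h3 := mul_le_mul_of_nonneg_left (le_abs_self (w R)) hRs.le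
    have h4 := mul_le_mul_of_nonneg_left (neg_abs_le (w R)) hRs.le
    rcases abs_cases (w r) with ⟨h, _⟩ | ⟨h, _⟩ <;> rw [h] <;> nlinarith
  have hG' : G r ≤ r ^ (-κ - s) * (A * (1 / (-κ - s) + E₀)) := by
    have := (hE0 r hr).2
    have hp : 0 < r ^ (-κ - s) := Real.rpow_pos_of_pos h0 _
    calc G r = r ^ (-κ - s) * (A * (1 / (-κ - s) + E r)) := by simp only [hG]; ring
      _ ≤ _ := by gcongr
  have hRr : R ^ (-s) ≤ R ^ κ * r ^ (-κ - s) := by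
    calc R ^ (-s) = R ^ κ * R ^ (-κ - s) := by rw [← Real.rpow_add hR]; ring_nf
      _ ≤ _ := by
        gcongr
        exact hr.1
  have hsp : r ^ (-κ - s) = r ^ (-s) * r ^ (-κ) := by
    rw [← Real.rpow_add h0]; ring_nf
  have : r ^ (-s) * |w r| ≤ r ^ (-s) *
      ((R ^ κ * |w R| + A * (1 / (-κ - s) + E₀)) * r ^ (-κ)) := by
    calc _ ≤ R ^ (-s) * |w R| + G r := hmain
      _ ≤ R ^ κ * r ^ (-κ - s) * |w R| + r ^ (-κ - s) * (A * (1 / (-κ - s) + E₀)) := by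
        gcongr
      _ = _ := by rw [hsp]; ring
  exact le_of_mul_le_mul_left this hpos

/-- One step in an unstable direction `s > -κ`: the equation is integrated from the right endpoint,
where the solution vanishes. -/
lemma eul_backward {s κ R L A : ℝ} (hR : 0 < R) (hs : -κ < s) (hA : 0 ≤ A)
    {w : ℝ → ℝ} (hw : Differentiable ℝ w) (hL : w L = 0)
    (hb : ∀ r ∈ Set.Ioo R L, |eul s w r| ≤ A * r ^ (-κ)) :
    ∀ r ∈ Set.Icc R L, |w r| ≤ A / (s + κ) * r ^ (-κ) := by
  have hd : 0 < s + κ := by linarith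
  set G : ℝ → ℝ := fun r => A / (s + κ) * r ^ (-s - κ) with hG
  have dG : ∀ r, 0 < r → HasDerivAt G (A / (s + κ) * ((-s - κ) * r ^ (-s - κ - 1))) r :=
    fun r hr => (Real.hasDerivAt_rpow_const (Or.inl hr.ne')).const_mul _
  have dw : ∀ r, 0 < r → HasDerivAt (fun r => r ^ (-s) * w r)
      ((-s * r ^ (-s - 1)) * w r + r ^ (-s) * deriv w r) r := fun r hr =>
    (Real.hasDerivAt_rpow_const (Or.inl hr.ne')).mul (hw r).hasDerivAt
  have hanti : ∀ c : ℝ, |c| = 1 →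
      AntitoneOn (fun r => c * (r ^ (-s) * w r) + G r) (Set.Icc R L) := by
    intro c hc
    refine antitoneOn_of_deriv_nonpos (convex_Icc R L) ?_ ?_ ?_
    · intro r hr
      have h0 : 0 < r := hR.trans_le hr.1
      exact (((dw r h0).const_mul c).add (dG r h0)).continuousAt.continuousWithinAt
    · intro r hr
      rw [interior_Icc] at hr
      have h0 : 0 < r := hR.trans hr.1
      exact (((dw r h0).const_mul c).add (dG r h0)).differentiableAt.differentiableWithinAt
    · intro r hr
      rw [interior_Icc] at hr
      have h0 : 0 < r := hR.trans hr.1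
      have hd' := (((dw r h0).const_mul c).add (dG r h0)).deriv
      have hbr := hb r hr
      refine (le_of_eq hd').trans ?_
      have e1 : r ^ (-s) = r ^ (-s - 1) * r := by
        rw [← Real.rpow_add_one h0.ne']; ring_nf
      have e2 : r ^ (-s - κ - 1) = r ^ (-s - 1) * r ^ (-κ) := by
        rw [← Real.rpow_add h0]; ring_nf
      have hp : 0 < r ^ (-s - 1) := Real.rpow_pos_of_pos h0 _
      have hc' : c * eul s w r ≤ A * r ^ (-κ) :=
        (le_abs_self _).trans (by rw [abs_mul, hc, one_mul]; exact hbr)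
      have e4 : c * (-s * r ^ (-s - 1) * w r + r ^ (-s) * deriv w r)
          = r ^ (-s - 1) * (c * eul s w r) := by
        rw [e1]; unfold eul; ring
      have e5 : A / (s + κ) * ((-s - κ) * (r ^ (-s - 1) * r ^ (-κ)))
          = -(r ^ (-s - 1) * (A * r ^ (-κ))) := by
        field_simp; ring
      rw [e4, e2, e5]
      have h5 := mul_le_mul_of_nonneg_left hc' hp.le
      linarith
  intro r hr
  have h0 : 0 < r := hR.trans_le hr.1
  have hL0 : 0 < L := h0.trans_le hr.2
  have hRL : R ≤ L := hr.1.trans hr.2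
  have hGL : 0 ≤ G L := by positivity
  have hpos : 0 < r ^ (-s) := Real.rpow_pos_of_pos h0 _
  have hmain : r ^ (-s) * |w r| ≤ G r := by
    have h1 := hanti 1 (by simp) hr ⟨hRL, le_rfl⟩ hr.2
    have h2 := hanti (-1) (by simp) hr ⟨hRL, le_rfl⟩ hr.2
    simp only [hL] at h1 h2
    rcases abs_cases (w r) with ⟨h, _⟩ | ⟨h, _⟩ <;> rw [h] <;> nlinarith
  have hsp : r ^ (-s - κ) = r ^ (-s) * r ^ (-κ) := by
    rw [← Real.rpow_add h0]; ring_nf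
  refine le_of_mul_le_mul_left (hmain.trans (le_of_eq ?_)) hpos
  simp only [hG, hsp]; ring

/-- Iterated inversion of unstable factors from the right endpoint. The constant is independent of both
endpoints. -/
lemma eulL_backward (l : List ℝ) {κ : ℝ} (hl : ∀ s ∈ l, -κ < s) :
    ∃ K : ℝ, 0 < K ∧ ∀ (R L A : ℝ) (φ : ℝ → ℝ), 0 < R → 0 ≤ A → ContDiff ℝ l.length φ →
      (∀ j < l.length, iteratedDeriv j φ L = 0) →
      (∀ r ∈ Set.Icc R L, |eulL l φ r| ≤ A * r ^ (-κ)) →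
      ∀ r ∈ Set.Icc R L, |φ r| ≤ K * A * r ^ (-κ) := by
  induction l with
  | nil => exact ⟨1, one_pos, fun R L A φ _ _ _ _ h r hr => by simpa [eulL] using h r hr⟩
  | cons s l ih =>
    obtain ⟨K, hK, H⟩ := ih fun t ht => hl t (List.mem_cons_of_mem _ ht)
    have hs : -κ < s := hl s List.mem_cons_self
    have hd : 0 < s + κ := by linarith
    refine ⟨K / (s + κ), by positivity, fun R L A φ hR hA hφ h0 hb r hr => ?_⟩
    simp only [List.length_cons] at hφ h0
    have hz := iteratedDeriv_eulL_eq_zero l hφ h0 (j := 0) (by omega)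
    rw [iteratedDeriv_zero] at hz
    have hdiff : Differentiable ℝ (eulL l φ) :=
      differentiable_of_contDiff_succ (m := 0)
        (contDiff_eulL l (hφ.of_le (by exact_mod_cast (by omega))))
    have h1 := eul_backward hR hs hA hdiff hz (fun r hr => hb r ⟨hr.1.le, hr.2.le⟩)
    have h2 := H R L (A / (s + κ)) φ hR (by positivity)
      (hφ.of_le (by exact_mod_cast Nat.le_succ _)) (fun j hj => h0 j (by omega)) h1 r hr
    calc _ ≤ _ := h2
      _ = _ := by ring

/-- Iterated inversion of stable factors from the left endpoint `R`. Only the constant in front of the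
data at `R` depends on `R`. -/
lemma eulL_forward (l : List ℝ) {κ : ℝ} (hl : ∀ s ∈ l, s < -κ) :
    ∃ K : ℝ, 0 < K ∧ ∀ R : ℝ, 0 < R → ∃ K' : ℝ, 0 < K' ∧
      ∀ (L A D : ℝ) (φ : ℝ → ℝ), 0 ≤ A → ContDiff ℝ l.length φ →
      (∀ j ≤ l.length, |iteratedDeriv j φ R| ≤ D) →
      (∀ r ∈ Set.Icc R L, |eulL l φ r| ≤ A * r ^ (-κ)) →
      ∀ r ∈ Set.Icc R L, |φ r| ≤ (K' * D + K * A) * r ^ (-κ) := by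
  induction l with
  | nil =>
    refine ⟨1, one_pos, fun R hR => ⟨1, one_pos, fun L A D φ _ _ hD h r hr => ?_⟩⟩
    have hD0 : 0 ≤ D := (abs_nonneg _).trans (hD 0 le_rfl)
    have hp : 0 < r ^ (-κ) := Real.rpow_pos_of_pos (hR.trans_le hr.1) _
    have := h r hr
    simp only [eulL] at this
    nlinarith
  | cons s l ih =>
    obtain ⟨K, hK, H⟩ := ih fun t ht => hl t (List.mem_cons_of_mem _ ht)
    have hs : s < -κ := hl s List.mem_cons_self
    have hd : 0 < -κ - s := by linarith
    refine ⟨K * (1 / (-κ - s)), by positivity, fun R hR => ?_⟩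
    obtain ⟨K', hK', H'⟩ := H R hR
    obtain ⟨K₂, hK₂, H₂⟩ := iteratedDeriv_eulL_bound l (l.length + 1) hR
    refine ⟨K' + K * (R ^ κ * K₂), by positivity, fun L A D φ hA hφ hD hb r hr => ?_⟩
    simp only [List.length_cons] at hφ hD
    have hD0 : 0 ≤ D := (abs_nonneg _).trans (hD 0 (by omega))
    have hw := H₂ φ D hφ hD 0 (by omega)
    rw [iteratedDeriv_zero] at hw
    have hdiff : Differentiable ℝ (eulL l φ) :=
      differentiable_of_contDiff_succ (m := 0)
        (contDiff_eulL l (hφ.of_le (by exact_mod_cast (by omega))))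
    have h1 := eul_forward (E₀ := 0) (e := fun _ => 0) (E := fun _ => 0) hR hs hA hdiff
      (fun r => hasDerivAt_const r 0) (by simp)
      (fun r hr => by simpa [eulL] using hb r ⟨hr.1.le, hr.2.le⟩)
    have h2 := H' L (R ^ κ * (K₂ * D) + A * (1 / (-κ - s))) D φ (by positivity)
      (hφ.of_le (by exact_mod_cast Nat.le_succ _)) (fun j hj => hD j (by omega)) ?_ r hr
    · calc _ ≤ _ := h2
        _ = _ := by ring
    · intro r hr
      have hp : 0 < r ^ (-κ) := Real.rpow_pos_of_pos (hR.trans_le hr.1) _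
      refine (h1 r hr).trans ?_
      rw [add_zero]
      gcongr

/-- A priori estimate for a product of stable and unstable Euler operators: the unstable factors
`b` act first and are inverted from `L`, where the Dirichlet conditions make all boundary terms
vanish; the stable factors `a :: as` are inverted from `R`. The constant `K` in front of the
right-hand side does not depend on `R` or `L`. -/
lemma eulL_estimate (a : ℝ) (as b : List ℝ) {κ : ℝ} (ha : ∀ s ∈ a :: as, s < -κ)
    (hb : ∀ s ∈ b, -κ < s) :
    ∃ K : ℝ, 0 < K ∧ ∀ R : ℝ, 0 < R → ∃ K' : ℝ, 0 < K' ∧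
      ∀ (L A D E₀ : ℝ) (h e E : ℝ → ℝ), 0 ≤ A → 0 ≤ E₀ →
      ContDiff ℝ (as.length + 1 + b.length : ℕ) h →
      (∀ j ≤ as.length + 1 + b.length, |iteratedDeriv j h R| ≤ D) →
      (∀ j < b.length, iteratedDeriv j h L = 0) →
      (∀ r, HasDerivAt E (e r) r) → (∀ r ∈ Set.Icc R L, 0 ≤ E r ∧ E r ≤ E₀) →
      (∀ r ∈ Set.Ioo R L, |eulL (a :: (as ++ b)) h r| ≤ A * r ^ (-κ) * (1 + r * e r)) →
      ∀ r ∈ Set.Icc R L, |h r| ≤ (K' * D + K * A * (1 + E₀)) * r ^ (-κ) := by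
  obtain ⟨Kb, hKb, Hb⟩ := eulL_backward b hb
  obtain ⟨Ka, hKa, Ha⟩ := eulL_forward as fun t ht => ha t (List.mem_cons_of_mem _ ht)
  have hs : a < -κ := ha a List.mem_cons_self
  have hd : 0 < -κ - a := by linarith
  refine ⟨Kb * Ka * (1 / (-κ - a) + 1), by positivity, fun R hR => ?_⟩
  obtain ⟨Ka', hKa', Ha'⟩ := Ha R hR
  obtain ⟨K₁, hK₁, H₁⟩ := iteratedDeriv_eulL_bound b (as.length + 1 + b.length) hR
  obtain ⟨K₂, hK₂, H₂⟩ := iteratedDeriv_eulL_bound (as ++ b) (as.length + 1 + b.length) hR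
  refine ⟨Kb * (Ka' * K₁ + Ka * (R ^ κ * K₂)), by positivity, ?_⟩
  intro L A D E₀ h e E hA hE₀ hh hD hL hE hEb hF
  have hD0 : 0 ≤ D := (abs_nonneg _).trans (hD 0 (by omega))
  have hw := H₂ h D hh hD 0 (by simp)
  rw [iteratedDeriv_zero] at hw
  have hdiff : Differentiable ℝ (eulL (as ++ b) h) :=
    differentiable_of_contDiff_succ (m := 0)
      (contDiff_eulL _ (hh.of_le (by
        rw [List.length_append]; exact_mod_cast (by omega))))
  have h1 := eul_forward hR hs hA hdiff hE hEb hF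
  have h2 := Ha' L (R ^ κ * (K₂ * D) + A * (1 / (-κ - a) + E₀)) (K₁ * D) (eulL b h)
    (by positivity) (contDiff_eulL b (hh.of_le (by exact_mod_cast (by omega))))
    (fun j hj => H₁ h D hh hD j (by omega)) ?_
  · have hA' : 0 ≤ Ka' * (K₁ * D) + Ka * (R ^ κ * (K₂ * D) + A * (1 / (-κ - a) + E₀)) := by
      positivity
    intro r hr
    have hp : 0 < r ^ (-κ) := Real.rpow_pos_of_pos (hR.trans_le hr.1) _
    refine (Hb R L _ h hR hA' (hh.of_le (by exact_mod_cast (by omega))) hL h2 r hr).trans ?_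
    gcongr
    have h3 : 1 / (-κ - a) + E₀ ≤ (1 / (-κ - a) + 1) * (1 + E₀) := by
      have : 0 < 1 / (-κ - a) := by positivity
      nlinarith
    calc _ = Kb * (Ka' * K₁ + Ka * (R ^ κ * K₂)) * D
          + Kb * Ka * A * (1 / (-κ - a) + E₀) := by ring
      _ ≤ Kb * (Ka' * K₁ + Ka * (R ^ κ * K₂)) * D
          + Kb * Ka * A * ((1 / (-κ - a) + 1) * (1 + E₀)) := by gcongr
      _ = _ := by ring
  · intro r hr
    have hp : 0 < r ^ (-κ) := Real.rpow_pos_of_pos (hR.trans_le hr.1) _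
    rw [← eulL_append]
    refine (h1 r hr).trans ?_
    gcongr

/-! ### The iterated Laplacian on radial functions -/

lemma hasDerivAt_norm_line {n : ℕ} (y : EuclideanSpace ℝ (Fin n)) (hy : y ≠ 0) (i : Fin n) :
    HasDerivAt (fun t : ℝ => ‖y + t • EuclideanSpace.single i (1 : ℝ)‖) (y i / ‖y‖) 0 := by
  have hy' : 0 < ‖y‖ := norm_pos_iff.2 hy
  have e : (fun t : ℝ => ‖y + t • EuclideanSpace.single i (1 : ℝ)‖)
      = fun t : ℝ => √(‖y‖ ^ 2 + 2 * (t * y i) + t ^ 2) := by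
    funext t
    rw [← Real.sqrt_sq (norm_nonneg (y + _)), norm_add_sq_real, inner_smul_right, norm_smul,
      EuclideanSpace.inner_single_right]
    simp
  rw [e]
  have hp : HasDerivAt (fun t : ℝ => ‖y‖ ^ 2 + 2 * (t * y i) + t ^ 2) (2 * y i) 0 := by
    have := ((((hasDerivAt_id (0 : ℝ)).mul_const (y i)).const_mul 2).const_add (‖y‖ ^ 2)).add
      (hasDerivAt_pow 2 (0 : ℝ))
    exact this.congr_deriv (by simp)
  have := hp.sqrt (by simpa using hy'.ne')
  convert this using 1
  simp only [zero_mul, mul_zero, add_zero, ne_eq, OfNat.ofNat_ne_zero, not_false_eq_true, zero_pow,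
    Real.sqrt_sq hy'.le]
  field_simp

/-- The Laplacian of a radial function in polar coordinates. -/
lemma lap_radial {n : ℕ} {u : EuclideanSpace ℝ (Fin n) → ℝ} {g : ℝ → ℝ}
    (hu : ContDiff ℝ (2 : ℕ) u) (hg : ContDiff ℝ (2 : ℕ) g) (hug : ∀ x, u x = g ‖x‖)
    (x : EuclideanSpace ℝ (Fin n)) (hx : x ≠ 0) :
    lap u x = deriv (deriv g) ‖x‖ + ((n : ℝ) - 1) / ‖x‖ * deriv g ‖x‖ := by
  have hx' : 0 < ‖x‖ := norm_pos_iff.2 hx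
  have hg1 : Differentiable ℝ g := differentiable_of_contDiff_succ (m := 1) hg
  have hg2 : Differentiable ℝ (deriv g) :=
    differentiable_of_contDiff_succ (m := 0) (contDiff_deriv_nat (m := 1) hg)
  have hu1 : Differentiable ℝ u := hu.differentiable (by norm_num)
  have hu2 : Differentiable ℝ (fderiv ℝ u) :=
    (hu.fderiv_right (m := 1) (by norm_num)).differentiable (by norm_num)
  have line : ∀ (y : EuclideanSpace ℝ (Fin n)) (i : Fin n),
      HasDerivAt (fun t : ℝ => y + t • EuclideanSpace.single i (1 : ℝ))
        (EuclideanSpace.single i (1 : ℝ)) 0 := fun y i => by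
    simpa using ((hasDerivAt_id (0 : ℝ)).smul_const (EuclideanSpace.single i (1 : ℝ))).const_add y
  have first : ∀ (y : EuclideanSpace ℝ (Fin n)) (i : Fin n), y ≠ 0 →
      fderiv ℝ u y (EuclideanSpace.single i 1) = deriv g ‖y‖ * (y i / ‖y‖) := by
    intro y i hy
    have h1 : HasDerivAt (fun t : ℝ => u (y + t • EuclideanSpace.single i (1 : ℝ)))
        (fderiv ℝ u y (EuclideanSpace.single i 1)) 0 := by
      have h := (hu1 (y + (0 : ℝ) • EuclideanSpace.single i (1 : ℝ))).hasFDerivAt.comp_hasDerivAt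
        (0 : ℝ) (line y i)
      simpa [Function.comp_def] using h
    have h2 : HasDerivAt (fun t : ℝ => u (y + t • EuclideanSpace.single i (1 : ℝ)))
        (deriv g ‖y‖ * (y i / ‖y‖)) 0 := by
      simp_rw [hug]
      have h := (hg1 ‖y + (0 : ℝ) • EuclideanSpace.single i (1 : ℝ)‖).hasDerivAt.comp (0 : ℝ)
        (hasDerivAt_norm_line y hy i)
      simpa [Function.comp_def] using h
    exact h1.unique h2
  have second : ∀ i : Fin n, iteratedFDeriv ℝ 2 u x (fun _ => EuclideanSpace.single i 1)
      = (deriv (deriv g) ‖x‖ / ‖x‖ ^ 2 - deriv g ‖x‖ / ‖x‖ ^ 3) * (x i) ^ 2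
        + deriv g ‖x‖ / ‖x‖ := by
    intro i
    rw [iteratedFDeriv_two_apply]
    have h1 : HasDerivAt (fun t : ℝ => fderiv ℝ u (x + t • EuclideanSpace.single i (1 : ℝ))
        (EuclideanSpace.single i 1))
        (fderiv ℝ (fderiv ℝ u) x (EuclideanSpace.single i 1) (EuclideanSpace.single i 1)) 0 := by
      have h := (hu2 (x + (0 : ℝ) • EuclideanSpace.single i (1 : ℝ))).hasFDerivAt.comp_hasDerivAt
        (0 : ℝ) (line x i)
      have h' := h.clm_apply (hasDerivAt_const (0 : ℝ) (EuclideanSpace.single i (1 : ℝ)))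
      simpa using h'
    have hxi : HasDerivAt (fun t : ℝ => (x + t • EuclideanSpace.single i (1 : ℝ)) i) 1 0 := by
      have : (fun t : ℝ => (x + t • EuclideanSpace.single i (1 : ℝ)) i) = fun t => x i + t := by
        funext t; simp
      rw [this]
      simpa using (hasDerivAt_id (0 : ℝ)).const_add (x i)
    have hN := hasDerivAt_norm_line x hx i
    have hx0 : ‖x + (0 : ℝ) • EuclideanSpace.single i (1 : ℝ)‖ = ‖x‖ := by simp
    have h2 : HasDerivAt (fun t : ℝ => fderiv ℝ u (x + t • EuclideanSpace.single i (1 : ℝ))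
        (EuclideanSpace.single i 1))
        (deriv (deriv g) ‖x‖ * (x i / ‖x‖) * (x i / ‖x‖)
          + deriv g ‖x‖ * ((1 * ‖x‖ - x i * (x i / ‖x‖)) / ‖x‖ ^ 2)) 0 := by
      have hG : HasDerivAt (fun t : ℝ => deriv g ‖x + t • EuclideanSpace.single i (1 : ℝ)‖)
          (deriv (deriv g) ‖x‖ * (x i / ‖x‖)) 0 := by
        have h := (hg2 ‖x + (0 : ℝ) • EuclideanSpace.single i (1 : ℝ)‖).hasDerivAt.comp (0 : ℝ) hN
        simpa [Function.comp_def] using h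
      have h := hG.mul (hxi.div hN (by rw [hx0]; exact hx'.ne'))
      have h' : HasDerivAt (fun t : ℝ => deriv g ‖x + t • EuclideanSpace.single i (1 : ℝ)‖ *
          ((x + t • EuclideanSpace.single i (1 : ℝ)) i
            / ‖x + t • EuclideanSpace.single i (1 : ℝ)‖))
          (deriv (deriv g) ‖x‖ * (x i / ‖x‖) * (x i / ‖x‖)
          + deriv g ‖x‖ * ((1 * ‖x‖ - x i * (x i / ‖x‖)) / ‖x‖ ^ 2)) 0 := by
        exact h.congr_deriv (by simp)
      refine h'.congr_of_eventuallyEq ?_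
      have hc : ContinuousAt (fun t : ℝ => x + t • EuclideanSpace.single i (1 : ℝ)) 0 :=
        (line x i).continuousAt
      have := hc.eventually_ne (y := 0) (by simpa using hx)
      filter_upwards [this] with t ht
      exact first _ i ht
    rw [h1.unique h2]
    field_simp
    ring
  have hsum : ∑ i : Fin n, (x i) ^ 2 = ‖x‖ ^ 2 := (EuclideanSpace.real_norm_sq_eq x).symm
  unfold lap
  simp_rw [second]
  rw [Finset.sum_add_distrib, ← Finset.mul_sum, hsum]
  simp only [Finset.sum_const, Finset.card_univ, Fintype.card_fin, nsmul_eq_mul]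
  field_simp
  ring

lemma contDiff_lap {n m : ℕ} {u : EuclideanSpace ℝ (Fin n) → ℝ} (hu : ContDiff ℝ (m + 2 : ℕ) u) :
    ContDiff ℝ m (lap u) := by
  unfold lap
  refine ContDiff.sum fun i _ => ?_
  have h : ContDiff ℝ m (iteratedFDeriv ℝ 2 u) :=
    hu.iteratedFDeriv_right (by exact_mod_cast le_rfl)
  exact (ContinuousMultilinearMap.apply ℝ (fun _ : Fin 2 => EuclideanSpace ℝ (Fin n)) ℝ
    (fun _ => EuclideanSpace.single i (1 : ℝ))).contDiff.comp h

/-- The unit vector along which radial functions are restricted. -/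
def ray {n : ℕ} (hn : 0 < n) : EuclideanSpace ℝ (Fin n) := EuclideanSpace.single ⟨0, hn⟩ 1

lemma norm_ray {n : ℕ} (hn : 0 < n) : ‖ray hn‖ = 1 := by simp [ray]

lemma norm_smul_ray {n : ℕ} (hn : 0 < n) {s : ℝ} (hs : 0 ≤ s) : ‖s • ray hn‖ = s := by
  rw [norm_smul, norm_ray, mul_one, Real.norm_of_nonneg hs]

lemma contDiff_ray {n m : ℕ} (hn : 0 < n) {u : EuclideanSpace ℝ (Fin n) → ℝ}
    (hu : ContDiff ℝ m u) : ContDiff ℝ m (fun s : ℝ => u (s • ray hn)) :=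
  hu.comp (contDiff_id.smul contDiff_const)

/-- Euler exponents of `r ^ (2m) Δ^m` on radial functions in dimension `n`. -/
def lapList (n : ℕ) : ℕ → List ℝ
  | 0 => []
  | m + 1 => (2 * m : ℝ) :: (2 * m + 2 - n : ℝ) :: lapList n m

lemma lapList_length (n m : ℕ) : (lapList n m).length = 2 * m := by
  induction m with
  | zero => rfl
  | succ m ih => simp [lapList, ih]; ring

lemma lap_radial_eul {n : ℕ} (hn : 0 < n) {u : EuclideanSpace ℝ (Fin n) → ℝ}
    (hu : ContDiff ℝ (2 : ℕ) u) (hr : ∀ x y, ‖x‖ = ‖y‖ → u x = u y) {s : ℝ} (hs : 0 < s) :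
    s ^ 2 * lap u (s • ray hn) = eul 0 (eul (2 - n) (fun s => u (s • ray hn))) s := by
  set g : ℝ → ℝ := fun s => u (s • ray hn) with hgdef
  have hg : ContDiff ℝ (2 : ℕ) g := contDiff_ray hn hu
  have hug : ∀ x, u x = g ‖x‖ := fun x => hr _ _ (norm_smul_ray hn (norm_nonneg x)).symm
  have hne : s • ray hn ≠ 0 := by
    rw [← norm_pos_iff, norm_smul_ray hn hs.le]; exact hs
  have hg1 : Differentiable ℝ g := differentiable_of_contDiff_succ (m := 1) hg
  have hg2 : Differentiable ℝ (deriv g) :=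
    differentiable_of_contDiff_succ (m := 0) (contDiff_deriv_nat (m := 1) hg)
  have key : HasDerivAt (eul (2 - n) g)
      (1 * deriv g s + s * deriv (deriv g) s - (2 - n) * deriv g s) s :=
    ((hasDerivAt_id s).mul (hg2 s).hasDerivAt).sub ((hg1 s).hasDerivAt.const_mul _)
  rw [lap_radial hu hg hug _ hne, norm_smul_ray hn hs.le]
  show _ = s * deriv (eul (2 - n) g) s - 0 * _
  rw [key.deriv]
  field_simp
  ring

lemma lap_radial_invariant {n : ℕ} (hn : 0 < n) {u : EuclideanSpace ℝ (Fin n) → ℝ}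
    (hu : ContDiff ℝ (2 : ℕ) u) (hr : ∀ x y, ‖x‖ = ‖y‖ → u x = u y)
    (x y : EuclideanSpace ℝ (Fin n)) (hxy : ‖x‖ = ‖y‖) : lap u x = lap u y := by
  have hug : ∀ x, u x = (fun s : ℝ => u (s • ray hn)) ‖x‖ :=
    fun x => hr _ _ (norm_smul_ray hn (norm_nonneg x)).symm
  by_cases hx : x = 0
  · have hy : y = 0 := by rw [← norm_eq_zero, ← hxy, hx, norm_zero]
    rw [hx, hy]
  · have hy : y ≠ 0 := by rw [← norm_pos_iff, ← hxy]; exact norm_pos_iff.2 hx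
    rw [lap_radial hu (contDiff_ray hn hu) hug x hx, lap_radial hu (contDiff_ray hn hu) hug y hy,
      hxy]

/-- Conjugating with a power shifts the exponent of the Euler operator. -/
lemma eul_shift (s : ℝ) (m : ℕ) {φ ψ : ℝ → ℝ} (h : ∀ r > 0, r ^ m * φ r = ψ r)
    (hφ : DifferentiableOn ℝ φ (Set.Ioi 0)) :
    ∀ r > 0, r ^ m * eul s φ r = eul (s + m) ψ r := by
  intro r hr
  have hd : HasDerivAt (fun r => r ^ m * φ r) (m * r ^ (m - 1) * φ r + r ^ m * deriv φ r) r :=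
    (hasDerivAt_pow m r).mul (hφ.differentiableAt (Ioi_mem_nhds hr)).hasDerivAt
  have he : ψ =ᶠ[𝓝 r] fun r => r ^ m * φ r := by
    filter_upwards [Ioi_mem_nhds hr] with t ht using (h t ht).symm
  unfold eul
  rw [he.deriv_eq, hd.deriv, ← h r hr]
  have : (m : ℝ) * r ^ (m - 1) * r = m * r ^ m := by
    rcases m with _ | m
    · simp
    · rw [Nat.add_sub_cancel]; ring
  linear_combination (-φ r) * this

lemma iterLap_contDiff {n : ℕ} (m p : ℕ) {u : EuclideanSpace ℝ (Fin n) → ℝ}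
    (hu : ContDiff ℝ (p + 2 * m : ℕ) u) : ContDiff ℝ p (iterLap m u) := by
  induction m generalizing p with
  | zero => exact hu
  | succ m ih =>
    unfold iterLap
    rw [Function.iterate_succ_apply']
    refine contDiff_lap (ih (p + 2) ?_)
    convert hu using 2
    ring

lemma iterLap_invariant {n : ℕ} (hn : 0 < n) (m : ℕ) {u : EuclideanSpace ℝ (Fin n) → ℝ}
    (hu : ContDiff ℝ (2 * m : ℕ) u) (hr : ∀ x y, ‖x‖ = ‖y‖ → u x = u y) :
    ∀ x y, ‖x‖ = ‖y‖ → iterLap m u x = iterLap m u y := by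
  induction m with
  | zero => exact hr
  | succ m ih =>
    intro x y hxy
    unfold iterLap
    rw [Function.iterate_succ_apply']
    refine lap_radial_invariant hn (iterLap_contDiff m 2 ?_) (ih ?_) x y hxy
    · convert hu using 2
      ring
    · exact hu.of_le (by exact_mod_cast (by omega))

/-- On radial functions `r ^ (2m) Δ^m` is a product of Euler operators: each further Laplacian
contributes the exponents `0` and `2 - n`, shifted by `2m` when moved past `r ^ (2m)`. -/
lemma iterLap_radial {n : ℕ} (hn : 0 < n) (m : ℕ) {u : EuclideanSpace ℝ (Fin n) → ℝ}
    (hu : ContDiff ℝ (2 * m : ℕ) u) (hr : ∀ x y, ‖x‖ = ‖y‖ → u x = u y) :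
    ∀ s > 0, s ^ (2 * m) * iterLap m u (s • ray hn)
      = eulL (lapList n m) (fun s => u (s • ray hn)) s := by
  induction m with
  | zero => intro s _; simp [iterLap, eulL, lapList]
  | succ m ih =>
    have hu' : ContDiff ℝ (2 * m : ℕ) u := hu.of_le (by exact_mod_cast (by omega))
    have hw : ContDiff ℝ (2 : ℕ) (iterLap m u) := iterLap_contDiff m 2 (by
      convert hu using 2
      ring)
    have hG := contDiff_ray hn hw
    have hd1 := differentiable_of_contDiff_succ (m := 1) hG
    have hd2 := differentiable_of_contDiff_succ (m := 0) (contDiff_eul (m := 1) (2 - n) hG)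
    have h1 := eul_shift (2 - n) (2 * m) (ih hu') hd1.differentiableOn
    have h2 := eul_shift 0 (2 * m) h1 hd2.differentiableOn
    intro s hs
    have h3 := h2 s hs
    rw [← lap_radial_eul hn hw (iterLap_invariant hn m hu' hr) hs] at h3
    have e1 : iterLap (m + 1) u = lap (iterLap m u) := by
      unfold iterLap; rw [Function.iterate_succ_apply']
    have e2 : (0 : ℝ) + ((2 * m : ℕ) : ℝ) = 2 * m := by push_cast; ring
    have e3 : (2 - n : ℝ) + ((2 * m : ℕ) : ℝ) = 2 * m + 2 - n := by push_cast; ring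
    rw [e2, e3] at h3
    rw [e1, lapList, eulL, eulL, ← h3]
    ring

/-- Splitting of the exponents into the stable ones `2j + 2 - n` and the unstable ones `2j`. -/
lemma lapList_perm (n m : ℕ) :
    (lapList n m).Perm ((List.range m).map (fun j : ℕ => (2 * j + 2 - n : ℝ))
      ++ (List.range m).map (fun j : ℕ => (2 * j : ℝ))) := by
  induction m with
  | zero => simp [lapList]
  | succ m ih =>
    rw [lapList, List.range_succ, List.map_append, List.map_append]
    simp only [List.map_cons, List.map_nil]
    set A := (List.range m).map (fun j : ℕ => (2 * j + 2 - n : ℝ))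
    set B := (List.range m).map (fun j : ℕ => (2 * j : ℝ))
    set a : ℝ := 2 * m + 2 - n
    set b : ℝ := 2 * m
    refine ((ih.cons a).cons b).trans ?_
    refine (List.Perm.swap a b _).trans ?_
    refine List.Perm.trans ?_ (List.Perm.append_right (B ++ [b])
      (List.perm_append_singleton a A).symm)
    refine List.Perm.cons a ?_
    change (b :: (A ++ B)).Perm (A ++ (B ++ [b]))
    rw [← List.append_assoc]
    exact (List.perm_append_singleton b (A ++ B)).symm

/-! ### Rescaled radial profiles -/

/-- The a priori estimate `eulL_estimate` for `r ^ (2k) Δ^k`. It is available because no exponent lies in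
the gap `(2k - n, 0)`, and the number `k` of unstable exponents equals the number of Dirichlet
conditions. -/
lemma radial_estimate (n k : ℕ) (hk : 1 ≤ k) {κ : ℝ} (hκ0 : 0 < κ)
    (hκ : κ < (n : ℝ) - 2 * k) :
    ∃ K : ℝ, 0 < K ∧ ∀ R : ℝ, 0 < R → ∃ K' : ℝ, 0 < K' ∧
      ∀ (L A D E₀ : ℝ) (h e E : ℝ → ℝ), 0 ≤ A → 0 ≤ E₀ → ContDiff ℝ (2 * k : ℕ) h →
      (∀ j ≤ 2 * k, |iteratedDeriv j h R| ≤ D) →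
      (∀ j < k, iteratedDeriv j h L = 0) →
      (∀ r, HasDerivAt E (e r) r) → (∀ r ∈ Set.Icc R L, 0 ≤ E r ∧ E r ≤ E₀) →
      (∀ r ∈ Set.Ioo R L, |eulL (lapList n k) h r| ≤ A * r ^ (-κ) * (1 + r * e r)) →
      ∀ r ∈ Set.Icc R L, |h r| ≤ (K' * D + K * A * (1 + E₀)) * r ^ (-κ) := by
  have hperm := lapList_perm n k
  set al := (List.range k).map (fun j : ℕ => (2 * j + 2 - n : ℝ)) with hal
  set be := (List.range k).map (fun j : ℕ => (2 * j : ℝ)) with hbe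
  have hlal : al.length = k := by simp [hal]
  have hlbe : be.length = k := by simp [hbe]
  have hsal : ∀ s ∈ al, s < -κ := by
    intro s hs
    obtain ⟨j, hj, rfl⟩ := List.mem_map.1 hs
    have : (j : ℝ) + 1 ≤ k := by exact_mod_cast List.mem_range.1 hj
    linarith
  have hsbe : ∀ s ∈ be, -κ < s := by
    intro s hs
    obtain ⟨j, hj, rfl⟩ := List.mem_map.1 hs
    have : (0 : ℝ) ≤ j := Nat.cast_nonneg j
    linarith
  clear_value al be
  obtain ⟨a, as, rfl⟩ := List.exists_cons_of_ne_nil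
    (fun h0 => by rw [h0] at hlal; simp at hlal; omega : al ≠ [])
  simp only [List.length_cons] at hlal
  obtain ⟨K, hK, H⟩ := eulL_estimate a as be hsal hsbe
  refine ⟨K, hK, fun R hR => ?_⟩
  obtain ⟨K', hK', H'⟩ := H R hR
  refine ⟨K', hK', fun L A D E₀ h e E hA hE₀ hh hD hL hE hEb hF => ?_⟩
  have hlen : as.length + 1 + be.length = 2 * k := by omega
  refine H' L A D E₀ h e E hA hE₀ (by rw [hlen]; exact hh) (by rw [hlen]; exact hD)
    (by rw [hlbe]; exact hL) hE hEb fun r hr => ?_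
  rw [eulL_perm hperm (by rw [lapList_length]; exact hh)] at hF
  exact hF r hr

/-- The radial profile of `u` rescaled by `ν`, that is `ρ ↦ ν ^ δ u(ν ρ e)` for a unit vector `e`. -/
def prof {n : ℕ} (hn : 0 < n) (δ ν : ℝ) (u : EuclideanSpace ℝ (Fin n) → ℝ) : ℝ → ℝ :=
  fun ρ => ν ^ δ * u ((ν * ρ) • ray hn)

lemma contDiff_prof {n m : ℕ} (hn : 0 < n) (δ ν : ℝ) {u : EuclideanSpace ℝ (Fin n) → ℝ}
    (hu : ContDiff ℝ m u) : ContDiff ℝ m (prof hn δ ν u) :=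
  contDiff_const.mul ((contDiff_ray hn hu).comp (contDiff_const.mul contDiff_id))

lemma iteratedDeriv_ray {n m : ℕ} (hn : 0 < n) {u : EuclideanSpace ℝ (Fin n) → ℝ}
    (hu : ContDiff ℝ m u) {j : ℕ} (hj : j ≤ m) (s : ℝ) :
    iteratedDeriv j (fun s : ℝ => u (s • ray hn)) s
      = iteratedFDeriv ℝ j u (s • ray hn) (fun _ => ray hn) := by
  have h := (ContinuousLinearMap.toSpanSingleton ℝ (ray hn)).iteratedFDeriv_comp_right hu s
    (i := j) (by exact_mod_cast hj)
  have e : u ∘ (ContinuousLinearMap.toSpanSingleton ℝ (ray hn)) = fun s : ℝ => u (s • ray hn) := by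
    funext s; simp [ContinuousLinearMap.toSpanSingleton_apply]
  rw [e] at h
  rw [iteratedDeriv_eq_iteratedFDeriv, h]
  simp [ContinuousLinearMap.toSpanSingleton_apply]

/-- The unit sphere corresponds to `ρ = 1 / ν` after rescaling. -/
lemma prof_dirichlet {n k : ℕ} (hn : 0 < n) (δ : ℝ) {ν : ℝ} (hν : 0 < ν)
    {u : EuclideanSpace ℝ (Fin n) → ℝ} (hu : ContDiff ℝ (2 * k : ℕ) u)
    (hD : ∀ x : EuclideanSpace ℝ (Fin n), ‖x‖ = 1 → ∀ j < k,
      iteratedFDeriv ℝ j u x (fun _ => x) = 0) :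
    ∀ j < k, iteratedDeriv j (prof hn δ ν u) (1 / ν) = 0 := by
  intro j hj
  have hg : ContDiff ℝ j (fun s : ℝ => u (s • ray hn)) :=
    contDiff_ray hn (hu.of_le (by exact_mod_cast (by omega)))
  have e : prof hn δ ν u = fun ρ => ν ^ δ * (fun s : ℝ => u (s • ray hn)) (ν * ρ) := rfl
  rw [e, iteratedDeriv_const_mul_field, iteratedDeriv_comp_const_mul hg ν]
  simp only
  rw [iteratedDeriv_ray hn hu (by omega), mul_one_div_cancel hν.ne', one_smul,
    hD _ (norm_ray hn) j hj]
  simp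

/-- Local convergence of the rescaled functions bounds the Cauchy data of the profiles. -/
lemma prof_data {n k : ℕ} (hn : 0 < n) (δ : ℝ) (ν : ℕ → ℝ)
    (u : ℕ → EuclideanSpace ℝ (Fin n) → ℝ) (hu : ∀ i, ContDiff ℝ (2 * k : ℕ) (u i))
    (U : EuclideanSpace ℝ (Fin n) → ℝ)
    (hc : CLocConv (2 * k) {(0 : EuclideanSpace ℝ (Fin n))}ᶜ
      (fun i z => (ν i) ^ δ * u i ((ν i) • z)) U) {R : ℝ} (hR : 0 < R) :
    ∃ D : ℝ, 0 < D ∧ ∀ᶠ i in atTop, ∀ j ≤ 2 * k,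
      |iteratedDeriv j (prof hn δ (ν i) (u i)) R| ≤ D := by
  have hne : R • ray hn ≠ 0 := by
    rw [← norm_pos_iff, norm_smul_ray hn hR.le]; exact hR
  have key : ∀ j ≤ 2 * k, ∃ D : ℝ, 0 < D ∧ ∀ᶠ i in atTop,
      |iteratedDeriv j (prof hn δ (ν i) (u i)) R| ≤ D := by
    intro j hj
    have h := hc {R • ray hn} (by simpa using hne.symm) isCompact_singleton j hj
    refine ⟨‖iteratedFDeriv ℝ j U (R • ray hn)‖ + 1, by positivity, ?_⟩
    filter_upwards [h.eventually (gt_mem_nhds one_pos)] with i hi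
    rw [ciSup_unique] at hi
    simp only [Set.default_coe_singleton] at hi
    set F : EuclideanSpace ℝ (Fin n) → ℝ := fun z => (ν i) ^ δ * u i ((ν i) • z) with hF
    have hFc : ContDiff ℝ (2 * k : ℕ) F :=
      contDiff_const.mul ((hu i).comp (contDiff_const_smul (ν i)))
    have e : prof hn δ (ν i) (u i) = fun s : ℝ => F (s • ray hn) := by
      funext s
      simp [prof, hF, smul_smul]
    rw [e, iteratedDeriv_ray hn hFc hj, ← Real.norm_eq_abs]
    refine ((iteratedFDeriv ℝ j F (R • ray hn)).le_opNorm _).trans ?_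
    simp only [norm_ray, Finset.prod_const_one, mul_one]
    have := norm_add_le (iteratedFDeriv ℝ j F (R • ray hn) - iteratedFDeriv ℝ j U (R • ray hn))
      (iteratedFDeriv ℝ j U (R • ray hn))
    rw [sub_add_cancel] at this
    linarith
  choose! D hD0 hD using key
  refine ⟨∑ j ∈ Finset.range (2 * k + 1), D j, ?_, ?_⟩
  · exact Finset.sum_pos (fun j hj => hD0 j (by have := Finset.mem_range.1 hj; omega)) ⟨0, by simp⟩
  · have : ∀ᶠ i in atTop, ∀ j ∈ Finset.range (2 * k + 1),
        |iteratedDeriv j (prof hn δ (ν i) (u i)) R| ≤ D j :=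
      (Finset.eventually_all _).2 fun j hj => hD j (by have := Finset.mem_range.1 hj; omega)
    filter_upwards [this] with i hi j hj
    have hj' : j ∈ Finset.range (2 * k + 1) := Finset.mem_range.2 (by omega)
    refine (hi j hj').trans ?_
    exact Finset.single_le_sum (f := D)
      (fun j hj => (hD0 j (by have := Finset.mem_range.1 hj; omega)).le) hj'

/-- The equation as a bound for the rescaled profile `h`. Since `δ (2* - 2) = 2k`, the nonlinear
coefficient is the power of the scale-invariant quantity `ρ ^ δ |h|`, while the coefficient of the
linear term is `lam (ν ρ) ^ (2k) ≤ lam`. -/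
lemma prof_equation {n k : ℕ} (hn : 2 * k < n) (hn0 : 0 < n) {lam ν : ℝ} (hlam : 0 < lam)
    (hν : 0 < ν) {u : EuclideanSpace ℝ (Fin n) → ℝ} (hu : ContDiff ℝ (2 * k : ℕ) u)
    (hr : ∀ x y, ‖x‖ = ‖y‖ → u x = u y)
    (heq : ∀ x ∈ Metric.ball (0 : EuclideanSpace ℝ (Fin n)) 1,
      iterLap k u x - lam * u x = |u x| ^ (twoStar n k - 2) * u x)
    {ρ : ℝ} (hρ : 0 < ρ) (hρ1 : ν * ρ < 1) :
    |eulL (lapList n k) (prof hn0 (((n : ℝ) - 2 * k) / 2) ν u) ρ|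
      ≤ (lam + (ρ ^ (((n : ℝ) - 2 * k) / 2)
          * |prof hn0 (((n : ℝ) - 2 * k) / 2) ν u ρ|) ^ (twoStar n k - 2))
        * |prof hn0 (((n : ℝ) - 2 * k) / 2) ν u ρ| := by
  set δ : ℝ := ((n : ℝ) - 2 * k) / 2 with hδ
  have hnk : (0 : ℝ) < (n : ℝ) - 2 * k := by
    have : ((2 * k : ℕ) : ℝ) < n := by exact_mod_cast hn
    push_cast at this; linarith
  have hexp : δ * (twoStar n k - 2) = (2 * k : ℕ) := by
    rw [hδ, twoStar]; push_cast; field_simp; ring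
  have hr0 : 0 < ν * ρ := by positivity
  set g : ℝ := u ((ν * ρ) • ray hn0) with hg
  have hp : prof hn0 δ ν u ρ = ν ^ δ * g := rfl
  have e1 : eulL (lapList n k) (prof hn0 δ ν u) ρ
      = ν ^ δ * ((ν * ρ) ^ (2 * k) * (lam * g + |g| ^ (twoStar n k - 2) * g)) := by
    have h := eulL_dilate (lapList n k) (fun s => u (s • ray hn0)) (ν ^ δ) ν ρ
    have h2 := iterLap_radial hn0 k hu hr (ν * ρ) hr0
    have h3 := heq ((ν * ρ) • ray hn0) (by
      rw [mem_ball_zero_iff, norm_smul_ray hn0 hr0.le]; exact hρ1)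
    rw [← h2] at h
    refine h.trans ?_
    rw [hg, ← h3]
    ring
  have hνδ : 0 < ν ^ δ := Real.rpow_pos_of_pos hν _
  have hpow : (ν * ρ) ^ (2 * k) ≤ 1 := pow_le_one₀ hr0.le hρ1.le
  have e2 : (ρ ^ δ * |prof hn0 δ ν u ρ|) ^ (twoStar n k - 2)
      = (ν * ρ) ^ (2 * k) * |g| ^ (twoStar n k - 2) := by
    rw [hp, abs_mul, abs_of_pos hνδ, ← mul_assoc, mul_comm (ρ ^ δ), ← Real.mul_rpow hν.le hρ.le,
      Real.mul_rpow (by positivity) (abs_nonneg g), ← Real.rpow_mul hr0.le, hexp,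
      Real.rpow_natCast]
  rw [e1, e2, hp, abs_mul, abs_mul, abs_mul, abs_of_pos hνδ, abs_of_pos (pow_pos hr0 _),
    ← add_mul, abs_mul]
  have hX : 0 ≤ |g| ^ (twoStar n k - 2) := Real.rpow_nonneg (abs_nonneg g) _
  rw [abs_of_nonneg (by positivity : 0 ≤ lam + |g| ^ (twoStar n k - 2))]
  have h5 : (ν * ρ) ^ (2 * k) * (lam + |g| ^ (twoStar n k - 2))
      ≤ lam + (ν * ρ) ^ (2 * k) * |g| ^ (twoStar n k - 2) := by nlinarith
  calc _ = (ν * ρ) ^ (2 * k) * (lam + |g| ^ (twoStar n k - 2)) * (ν ^ δ * |g|) := by ring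
    _ ≤ _ := by gcongr

/-- Polar coordinates: the `L^p` norm on the unit ball controls the one-dimensional integral. -/
lemma radial_energy {n : ℕ} (hn : 0 < n) : ∃ c : ℝ, 0 < c ∧
    ∀ (u : EuclideanSpace ℝ (Fin n) → ℝ) (p M a : ℝ), Continuous u →
      (∀ x y, ‖x‖ = ‖y‖ → u x = u y) → 0 < p →
      (∫ x in Metric.ball (0 : EuclideanSpace ℝ (Fin n)) 1, |u x| ^ p) ≤ M → 0 < a → a ≤ 1 →
      ∫ r in a..1, r ^ (n - 1) * |u (r • ray hn)| ^ p ≤ c * M := by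
  have : Nontrivial (EuclideanSpace ℝ (Fin n)) :=
    ⟨⟨ray hn, 0, by rw [← norm_pos_iff, norm_ray]; exact one_pos⟩⟩
  have hvol : 0 < (volume : Measure (EuclideanSpace ℝ (Fin n))).real (ball 0 1) :=
    ENNReal.toReal_pos (measure_ball_pos _ _ one_pos).ne' measure_ball_lt_top.ne
  have hn' : (0 : ℝ) < n := by exact_mod_cast hn
  refine ⟨(n * (volume : Measure (EuclideanSpace ℝ (Fin n))).real (ball 0 1))⁻¹, by positivity,
    fun u p M a hu hr hp hM ha ha1 => ?_⟩
  set G : ℝ → ℝ := fun r => |u (r • ray hn)| ^ p with hG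
  have hGc : Continuous G := by
    have : Continuous fun r : ℝ => u (r • ray hn) := by fun_prop
    exact this.abs.rpow_const fun _ => Or.inr hp.le
  have hcont : Continuous fun r : ℝ => r ^ (n - 1) * G r := by fun_prop
  have h := integral_fun_norm_addHaar (volume : Measure (EuclideanSpace ℝ (Fin n)))
    (Set.indicator (Set.Iio (1 : ℝ)) G)
  have e1 : ∫ x : EuclideanSpace ℝ (Fin n), Set.indicator (Set.Iio (1 : ℝ)) G ‖x‖
      = ∫ x in Metric.ball (0 : EuclideanSpace ℝ (Fin n)) 1, |u x| ^ p := by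
    rw [← integral_indicator measurableSet_ball]
    congr 1
    funext x
    by_cases hx : ‖x‖ < 1
    · rw [Set.indicator_of_mem (by exact hx), Set.indicator_of_mem (by simpa using hx)]
      simp only [hG]
      rw [hr _ x (norm_smul_ray hn (norm_nonneg x))]
    · rw [Set.indicator_of_notMem (by exact hx), Set.indicator_of_notMem (by simpa using hx)]
  have e2 : ∫ y in Set.Ioi (0 : ℝ), y ^ (n - 1) • Set.indicator (Set.Iio (1 : ℝ)) G y
      = ∫ y in Set.Ioo (0 : ℝ) 1, y ^ (n - 1) * G y := by
    have : (fun y : ℝ => y ^ (n - 1) • Set.indicator (Set.Iio (1 : ℝ)) G y)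
        = Set.indicator (Set.Iio (1 : ℝ)) (fun y => y ^ (n - 1) * G y) := by
      funext y
      by_cases hy : y ∈ Set.Iio (1 : ℝ) <;> simp [hy]
    rw [this, setIntegral_indicator measurableSet_Iio, Set.Ioi_inter_Iio]
  rw [e1, finrank_euclideanSpace_fin, e2] at h
  have hle : ∫ r in a..1, r ^ (n - 1) * G r ≤ ∫ y in Set.Ioo (0 : ℝ) 1, y ^ (n - 1) * G y := by
    rw [← integral_Ioc_eq_integral_Ioo, ← intervalIntegral.integral_of_le zero_le_one]
    refine intervalIntegral.integral_mono_interval ha.le ha1 le_rfl ?_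
      (hcont.intervalIntegrable _ _)
    filter_upwards [ae_restrict_mem measurableSet_Ioc] with r hr
    have h1 : 0 ≤ r := hr.1.le
    have h2 : 0 ≤ G r := Real.rpow_nonneg (abs_nonneg _) _
    show 0 ≤ r ^ (n - 1) * G r
    positivity
  rw [h, nsmul_eq_mul, smul_eq_mul, ← mul_assoc] at hM
  rw [inv_mul_eq_div, le_div_iff₀ (by positivity)]
  have hpos : 0 < n * (volume : Measure (EuclideanSpace ℝ (Fin n))).real (ball 0 1) := by
    positivity
  nlinarith [mul_le_mul_of_nonneg_left hle hpos.le]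

/-! ### Uniform decay of the profiles -/

/-- The rescaled profiles satisfy `|h| ≤ C ρ ^ (-δ)` outside the unit ball, uniformly in `i`. The
energy bound enters through the `L¹(dr / r)` part of the right-hand side. In particular the suprema
in the concentration hypothesis are bounded, so that their `limsup` is a genuine one. -/
lemma prof_bounded {n k : ℕ} (hk : 1 ≤ k) (hn : 2 * k < n) (hn0 : 0 < n) {M : ℝ}
    {lam : ℕ → ℝ} {u : ℕ → EuclideanSpace ℝ (Fin n) → ℝ} (hM : 0 < M)
    (hsetup : BlowUpSetup n k M lam u) {ν : ℕ → ℝ} {ε₀ : ℝ} (hconc : Concentration n k u ν ε₀) :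
    ∃ C : ℝ, 0 < C ∧ ∀ᶠ i in atTop, ∀ ρ ∈ Set.Icc 1 (1 / ν i),
      |prof hn0 (((n : ℝ) - 2 * k) / 2) (ν i) (u i) ρ| ≤ C * ρ ^ (-(((n : ℝ) - 2 * k) / 2)) := by
  obtain ⟨hlam, hlam0, hu, hr, heq, hdir, -, hen⟩ := hsetup
  obtain ⟨hν, hν0, -, hloc, -⟩ := hconc
  have hnk : (0 : ℝ) < (n : ℝ) - 2 * k := by
    have : ((2 * k : ℕ) : ℝ) < n := by exact_mod_cast hn
    push_cast at this; linarith
  set δ : ℝ := ((n : ℝ) - 2 * k) / 2 with hδ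
  have hδ0 : 0 < δ := by rw [hδ]; positivity
  set p := twoStar n k with hp
  have hk0 : (0 : ℝ) < k := by exact_mod_cast hk
  have hδp : δ * p = n := by rw [hδ, hp, twoStar]; field_simp
  have hp2 : 2 < p := by
    rw [hp, twoStar, lt_div_iff₀ hnk]; linarith
  have hp0 : 0 < p := by linarith
  obtain ⟨K, hK, H⟩ := radial_estimate n k hk hδ0 (by rw [hδ]; linarith)
  obtain ⟨K', hK', H'⟩ := H 1 one_pos
  obtain ⟨D, hD0, hD⟩ := prof_data hn0 δ ν u hu _ hloc one_pos
  obtain ⟨c, hc, hcE⟩ := radial_energy hn0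
  have hE₀ : 0 ≤ c * M ^ p := by positivity
  refine ⟨K' * D + K * 2 * (1 + c * M ^ p), by positivity, ?_⟩
  filter_upwards [hD, hlam0.eventually (gt_mem_nhds one_pos), hν0.eventually (gt_mem_nhds one_pos)]
    with i hDi hlami hνi
  have hνp := hν i
  have hL1 : 1 ≤ 1 / ν i := by rw [le_div_iff₀ hνp]; linarith
  set h := prof hn0 δ (ν i) (u i) with hh
  have hhc : Continuous h := (contDiff_prof hn0 δ (ν i) (hu i)).continuous
  set e : ℝ → ℝ := fun r => r ^ (n - 1) * |h r| ^ p with he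
  have hec : Continuous e :=
    (continuous_pow _).mul (hhc.abs.rpow_const fun _ => Or.inr hp0.le)
  have hepos : ∀ r, 0 ≤ r → 0 ≤ e r := fun r hr0 =>
    mul_nonneg (pow_nonneg hr0 _) (Real.rpow_nonneg (abs_nonneg _) _)
  have hEd : ∀ r, HasDerivAt (fun r => ∫ t in (1 : ℝ)..r, e t) (e r) r := fun r =>
    intervalIntegral.integral_hasDerivAt_right (hec.intervalIntegrable _ _)
      hec.stronglyMeasurable.stronglyMeasurableAtFilter hec.continuousAt
  have hEL : ∫ t in (1 : ℝ)..(1 / ν i), e t ≤ c * M ^ p := by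
    -- the energy integral is invariant under dilation because `δ * p = n`
    have hb := hcE (u i) p (M ^ p) (ν i) (hu i).continuous (hr i) hp0 (hen i) hνp hνi.le
    have hcv := intervalIntegral.integral_comp_mul_left (a := 1) (b := 1 / ν i)
      (fun r => r ^ (n - 1) * |u i (r • ray hn0)| ^ p) hνp.ne'
    rw [mul_one, mul_one_div_cancel hνp.ne'] at hcv
    refine le_trans (le_of_eq ?_) hb
    have hpt : ∀ t, e t = ν i * ((ν i * t) ^ (n - 1) * |u i ((ν i * t) • ray hn0)| ^ p) := by
      intro t
      have hsucc : (ν i) ^ n = (ν i) ^ (n - 1) * ν i := by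
        rw [← pow_succ]; congr 1; omega
      simp only [he, hh, prof]
      rw [abs_mul, abs_of_pos (Real.rpow_pos_of_pos hνp _),
        Real.mul_rpow (Real.rpow_pos_of_pos hνp _).le (abs_nonneg _), ← Real.rpow_mul hνp.le, hδp,
        Real.rpow_natCast, hsucc, mul_pow]
      ring
    simp_rw [hpt]
    rw [intervalIntegral.integral_const_mul, hcv, smul_eq_mul, ← mul_assoc,
      mul_inv_cancel₀ hνp.ne', one_mul]
  refine H' (1 / ν i) 2 D (c * M ^ p) h e _ (by norm_num) hE₀ (contDiff_prof hn0 δ _ (hu i)) hDi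
    (prof_dirichlet hn0 δ hνp (hu i) (hdir i)) hEd ?_ ?_
  · intro r hr'
    refine ⟨intervalIntegral.integral_nonneg hr'.1 fun t ht => hepos t (by linarith [ht.1]),
      le_trans ?_ hEL⟩
    refine intervalIntegral.integral_mono_interval le_rfl hr'.1 hr'.2 ?_
      (hec.intervalIntegrable _ _)
    filter_upwards [ae_restrict_mem measurableSet_Ioc] with t ht
    exact hepos t (by linarith [ht.1])
  · intro r hr'
    have hr0 : 0 < r := by linarith [hr'.1]
    have hr1 : ν i * r < 1 := by
      have := hr'.2
      rw [lt_div_iff₀ hνp] at this; linarith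
    have hmain := prof_equation hn hn0 (hlam i) hνp (hu i) (hr i) (heq i) hr0 hr1
    rw [← hδ, ← hp, ← hh] at hmain
    refine hmain.trans ?_
    have hrδ : 0 < r ^ δ := Real.rpow_pos_of_pos hr0 _
    set q := r ^ δ * |h r| with hq
    have hq0 : 0 ≤ q := by positivity
    have hhq : |h r| = r ^ (-δ) * q := by
      rw [hq, ← mul_assoc, ← Real.rpow_add hr0]; simp
    have hqp : q ^ p = r * e r := by
      rw [hq, Real.mul_rpow hrδ.le (abs_nonneg _), ← Real.rpow_mul hr0.le, hδp, Real.rpow_natCast,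
        he]
      have hsucc : r ^ n = r * r ^ (n - 1) := by
        rw [← pow_succ']; congr 1; omega
      simp only [hsucc]; ring
    have b1 : q ≤ 1 + q ^ p := by
      rcases le_total q 1 with h1 | h1
      · have : 0 ≤ q ^ p := Real.rpow_nonneg hq0 _
        linarith
      · have : q ≤ q ^ p := by
          simpa using Real.rpow_le_rpow_of_exponent_le h1 (by linarith : (1 : ℝ) ≤ p)
        linarith
    have b2 : q ^ (p - 2) * q ≤ 1 + q ^ p := by
      rcases le_total q 1 with h1 | h1
      · have h2 : 0 ≤ q ^ p := Real.rpow_nonneg hq0 _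
        have h3 : q ^ (p - 2) ≤ 1 := Real.rpow_le_one hq0 h1 (by linarith)
        have h4 : 0 ≤ q ^ (p - 2) := Real.rpow_nonneg hq0 _
        nlinarith
      · have h0 : 0 < q := by linarith
        rw [← Real.rpow_add_one h0.ne']
        have := Real.rpow_le_rpow_of_exponent_le h1 (by linarith : p - 2 + 1 ≤ p)
        linarith
    have hrm : 0 < r ^ (-δ) := Real.rpow_pos_of_pos hr0 _
    rw [← hqp]
    have b3 : lam i * q ≤ 1 * (1 + q ^ p) := by
      have := hlam i
      gcongr
    calc (lam i + q ^ (p - 2)) * |h r| = r ^ (-δ) * (lam i * q + q ^ (p - 2) * q) := by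
          rw [hhq]; ring
      _ ≤ r ^ (-δ) * (1 * (1 + q ^ p) + (1 + q ^ p)) := by gcongr
      _ = _ := by ring

/-- Norms of `u` at `x` in terms of the rescaled profile. -/
lemma prof_eq {n : ℕ} (hn : 0 < n) (δ : ℝ) {ν : ℝ} (hν : 0 < ν)
    {u : EuclideanSpace ℝ (Fin n) → ℝ} (hr : ∀ x y, ‖x‖ = ‖y‖ → u x = u y)
    (x : EuclideanSpace ℝ (Fin n)) : |prof hn δ ν u (‖x‖ / ν)| = ν ^ δ * |u x| := by
  have : ν * (‖x‖ / ν) = ‖x‖ := by field_simp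
  rw [prof, this, hr _ x (norm_smul_ray hn (norm_nonneg x)), abs_mul,
    abs_of_pos (Real.rpow_pos_of_pos hν _)]

/-- The concentration hypothesis for the rescaled profiles: `ρ ^ δ |h|` is uniformly small beyond a fixed
radius `R`. -/
lemma prof_small {n k : ℕ} (hk : 1 ≤ k) (hn : 2 * k < n) (hn0 : 0 < n) {M : ℝ}
    {lam : ℕ → ℝ} {u : ℕ → EuclideanSpace ℝ (Fin n) → ℝ} (hM : 0 < M)
    (hsetup : BlowUpSetup n k M lam u) {ν : ℕ → ℝ} {ε₀ : ℝ} (hconc : Concentration n k u ν ε₀)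
    {ε : ℝ} (hε : 0 < ε) :
    ∃ R : ℝ, 1 ≤ R ∧ ∀ᶠ i in atTop, ∀ ρ ∈ Set.Ioo R (1 / ν i),
      ρ ^ (((n : ℝ) - 2 * k) / 2)
        * |prof hn0 (((n : ℝ) - 2 * k) / 2) (ν i) (u i) ρ| ≤ ε := by
  obtain ⟨C, hC, hb⟩ := prof_bounded hk hn hn0 hM hsetup hconc
  obtain ⟨-, -, -, hr, -, -, -, -⟩ := hsetup
  obtain ⟨hν, -, -, -, hlim⟩ := hconc
  set δ : ℝ := ((n : ℝ) - 2 * k) / 2 with hδ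
  obtain ⟨R, hR, hR1⟩ := ((hlim.eventually (gt_mem_nhds hε)).and (eventually_ge_atTop 1)).exists
  refine ⟨R, hR1, ?_⟩
  have hbd : ∀ᶠ i in atTop, ∀ x : {x : EuclideanSpace ℝ (Fin n) //
      x ∈ Metric.ball (0 : EuclideanSpace ℝ (Fin n)) 1 ∧ R * ν i ≤ ‖x‖},
      ‖(x : EuclideanSpace ℝ (Fin n))‖ ^ δ * |u i x| ≤ C := by
    filter_upwards [hb] with i hi
    rintro ⟨x, hx1, hx2⟩
    have hνp := hν i
    have hx1' : ‖x‖ < 1 := by simpa using hx1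
    have hlow : 1 ≤ ‖x‖ / ν i := by
      rw [le_div_iff₀ hνp]
      nlinarith
    have h := hi (‖x‖ / ν i) ⟨hlow, by gcongr⟩
    have hx0 : 0 < ‖x‖ := by
      have : 0 < R * ν i := by positivity
      linarith
    rw [prof_eq hn0 δ hνp (hr i) x, Real.rpow_neg (by positivity),
      Real.div_rpow hx0.le hνp.le, ← div_eq_mul_inv, div_div_eq_mul_div] at h
    have hxδ : 0 < ‖x‖ ^ δ := Real.rpow_pos_of_pos hx0 _
    have hνδ : 0 < ν i ^ δ := Real.rpow_pos_of_pos hνp _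
    rw [le_div_iff₀ hxδ] at h
    show ‖x‖ ^ δ * |u i x| ≤ C
    refine le_of_mul_le_mul_left ?_ hνδ
    linarith
  have hev := eventually_lt_of_limsup_lt hR
    (isBoundedUnder_of_eventually_le (a := C) (hbd.mono fun i hi => Real.iSup_le hi hC.le))
  filter_upwards [hev, hbd] with i hi hbi ρ hρ
  have hνp := hν i
  have hρ0 : 0 < ρ := by linarith [hρ.1]
  have hn1 : ‖(ν i * ρ) • ray hn0‖ = ν i * ρ := norm_smul_ray hn0 (by positivity)
  have hlt : ν i * ρ < 1 := by
    have := hρ.2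
    rw [lt_div_iff₀ hνp] at this; linarith
  have hle := le_ciSup (f := fun x : {x : EuclideanSpace ℝ (Fin n) //
      x ∈ Metric.ball (0 : EuclideanSpace ℝ (Fin n)) 1 ∧ R * ν i ≤ ‖x‖} =>
      ‖(x : EuclideanSpace ℝ (Fin n))‖ ^ δ * |u i x|)
    ⟨C, by rintro _ ⟨x, rfl⟩; exact hbi x⟩
    ⟨(ν i * ρ) • ray hn0, by rw [mem_ball_zero_iff, hn1]; exact hlt, by
      rw [hn1]; nlinarith [hρ.1]⟩
  refine le_trans (le_of_eq ?_) (hle.trans hi.le)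
  simp only [hn1, prof]
  rw [abs_mul, abs_of_pos (Real.rpow_pos_of_pos hνp _), Real.mul_rpow hνp.le hρ0.le]
  ring

/-- Decay of the rescaled profiles: the nonlinear term is a small multiple of `h`, so it is absorbed
in the weighted supremum `N` of `|h|`, which is finite by compactness. -/
lemma prof_decay {n k : ℕ} (hk : 1 ≤ k) (hn : 2 * k < n) (hn0 : 0 < n) {M : ℝ}
    {lam : ℕ → ℝ} {u : ℕ → EuclideanSpace ℝ (Fin n) → ℝ} (hM : 0 < M)
    (hsetup : BlowUpSetup n k M lam u) {ν : ℕ → ℝ} {ε₀ : ℝ} (hconc : Concentration n k u ν ε₀)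
    {κ : ℝ} (hκ0 : 0 < κ) (hκ : κ < (n : ℝ) - 2 * k) :
    ∃ C : ℝ, 0 < C ∧ ∀ᶠ i in atTop, ∀ ρ ∈ Set.Icc 1 (1 / ν i),
      |prof hn0 (((n : ℝ) - 2 * k) / 2) (ν i) (u i) ρ| ≤ C * ρ ^ (-κ) := by
  obtain ⟨C₀, hC₀, hb⟩ := prof_bounded hk hn hn0 hM hsetup hconc
  obtain ⟨K, hK, H⟩ := radial_estimate n k hk hκ0 hκ
  have hnk : (0 : ℝ) < (n : ℝ) - 2 * k := by linarith
  have hk0 : (0 : ℝ) < k := by exact_mod_cast hk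
  have hp2 : 0 < twoStar n k - 2 := by
    have : 2 < twoStar n k := by rw [twoStar, lt_div_iff₀ hnk]; linarith
    linarith
  -- `ε` is chosen so that `K * (lam i + ε ^ (2* - 2)) ≤ 1 / 2` for large `i`
  have hη : 0 < 1 / (4 * K) := by positivity
  set ε : ℝ := (1 / (4 * K)) ^ (1 / (twoStar n k - 2)) with hεdef
  have hε : 0 < ε := Real.rpow_pos_of_pos hη _
  have hεp : ε ^ (twoStar n k - 2) = 1 / (4 * K) := by
    rw [hεdef, ← Real.rpow_mul hη.le, one_div_mul_cancel hp2.ne', Real.rpow_one]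
  obtain ⟨R, hR1, hsmall⟩ := prof_small hk hn hn0 hM hsetup hconc hε
  obtain ⟨hlam, hlam0, hu, hr, heq, hdir, -, -⟩ := hsetup
  obtain ⟨hν, hν0, -, hloc, -⟩ := hconc
  set δ : ℝ := ((n : ℝ) - 2 * k) / 2 with hδ
  have hδ0 : 0 < δ := by rw [hδ]; positivity
  have hR0 : 0 < R := by linarith
  obtain ⟨K', hK', H'⟩ := H R hR0
  obtain ⟨D, hD0, hD⟩ := prof_data hn0 δ ν u hu _ hloc hR0
  refine ⟨2 * (K' * D) + C₀ * R ^ κ, by positivity, ?_⟩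
  filter_upwards [hb, hsmall, hD, hlam0.eventually (gt_mem_nhds hη),
    hν0.eventually (gt_mem_nhds (one_div_pos.2 hR0))] with i hbi hsi hDi hlami hνi
  have hνp := hν i
  have hRL : R ≤ 1 / ν i := by
    rw [lt_div_iff₀ hR0] at hνi
    rw [le_div_iff₀ hνp]; linarith
  set h := prof hn0 δ (ν i) (u i) with hh
  have hhc : Continuous h := (contDiff_prof hn0 δ (ν i) (hu i)).continuous
  have hwc : ContinuousOn (fun r => r ^ κ * |h r|) (Set.Icc R (1 / ν i)) :=
    ContinuousOn.mul (fun r hr' => (Real.continuousAt_rpow_const r κ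
      (Or.inr hκ0.le)).continuousWithinAt) hhc.abs.continuousOn
  obtain ⟨r₀, hr₀, hmax⟩ := isCompact_Icc.exists_isMaxOn ⟨R, ⟨le_rfl, hRL⟩⟩ hwc
  set N := r₀ ^ κ * |h r₀| with hN
  have hr₀p : 0 < r₀ := by linarith [hr₀.1]
  have hN0 : 0 ≤ N := by positivity
  have hNb : ∀ r ∈ Set.Icc R (1 / ν i), |h r| ≤ N * r ^ (-κ) := by
    intro r hr'
    have hr0 : 0 < r := by linarith [hr'.1]
    rw [Real.rpow_neg hr0.le, ← div_eq_mul_inv, le_div_iff₀ (Real.rpow_pos_of_pos hr0 _)]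
    have : r ^ κ * |h r| ≤ N := hmax hr'
    linarith
  have hest := H' (1 / ν i) (1 / (2 * K) * N) D 0 h (fun _ => 0) (fun _ => 0) (by positivity)
    le_rfl (contDiff_prof hn0 δ _ (hu i)) hDi (prof_dirichlet hn0 δ hνp (hu i) (hdir i))
    (fun r => hasDerivAt_const r 0) (by simp) (by
      intro r hr'
      have hr0 : 0 < r := by linarith [hr'.1]
      have hr1 : ν i * r < 1 := by
        have := hr'.2
        rw [lt_div_iff₀ hνp] at this; linarith
      have hmain := prof_equation hn hn0 (hlam i) hνp (hu i) (hr i) (heq i) hr0 hr1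
      rw [← hδ, ← hh] at hmain
      have hq : (r ^ δ * |h r|) ^ (twoStar n k - 2) ≤ 1 / (4 * K) := by
        rw [← hεp]
        exact Real.rpow_le_rpow (by positivity) (hsi r hr') hp2.le
      have hsum : lam i + (r ^ δ * |h r|) ^ (twoStar n k - 2) ≤ 1 / (2 * K) := by
        have : 1 / (4 * K) + 1 / (4 * K) = 1 / (2 * K) := by field_simp; norm_num
        linarith
      calc _ ≤ _ := hmain
        _ ≤ 1 / (2 * K) * (N * r ^ (-κ)) :=
          mul_le_mul hsum (hNb r ⟨hr'.1.le, hr'.2.le⟩) (abs_nonneg _) (by positivity)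
        _ = _ := by ring)
  have hNle : N ≤ 2 * (K' * D) := by
    have h1 := hest r₀ hr₀
    have h2 : K * (1 / (2 * K) * N) * (1 + 0) = N / 2 := by field_simp; ring
    rw [h2, Real.rpow_neg hr₀p.le, ← div_eq_mul_inv,
      le_div_iff₀ (Real.rpow_pos_of_pos hr₀p _)] at h1
    have h3 : |h r₀| * r₀ ^ κ = N := by rw [hN]; ring
    linarith
  intro ρ hρ
  have hρ0 : 0 < ρ := by linarith [hρ.1]
  have hρκ : 0 < ρ ^ (-κ) := Real.rpow_pos_of_pos hρ0 _
  have hRκ : 0 < R ^ κ := Real.rpow_pos_of_pos hR0 _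
  rcases le_total R ρ with hRρ | hRρ
  · refine (hNb ρ ⟨hRρ, hρ.2⟩).trans ?_
    gcongr
    have : 0 ≤ C₀ * R ^ κ := by positivity
    linarith
  · have h1 : ρ ^ (-δ) ≤ 1 := Real.rpow_le_one_of_one_le_of_nonpos hρ.1 (by linarith)
    have h2 : 1 ≤ R ^ κ * ρ ^ (-κ) := by
      rw [Real.rpow_neg hρ0.le, ← div_eq_mul_inv, one_le_div (Real.rpow_pos_of_pos hρ0 _)]
      exact Real.rpow_le_rpow hρ0.le hRρ hκ0.le
    calc |h ρ| ≤ C₀ * ρ ^ (-δ) := hbi ρ hρ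
      _ ≤ C₀ * (R ^ κ * ρ ^ (-κ)) := by gcongr; linarith
      _ ≤ (2 * (K' * D) + C₀ * R ^ κ) * ρ ^ (-κ) := by
        have : 0 ≤ 2 * (K' * D) * ρ ^ (-κ) := by positivity
        linarith

theorem stmt8 (n k : ℕ) (hk : 2 ≤ 2 * k) (hn : 2 * k < n) (M : ℝ) (hM : 0 < M)
    (lam : ℕ → ℝ) (u : ℕ → EuclideanSpace ℝ (Fin n) → ℝ)
    (hsetup : BlowUpSetup n k M lam u)
    (ν : ℕ → ℝ) (ε₀ : ℝ) (hconc : Concentration n k u ν ε₀) :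
    ∀ γ : ℝ, 0 < γ → γ < (n : ℝ) - 2 * k →
      ∃ C : ℝ, 0 < C ∧ ∃ i₀ : ℕ, ∀ i ≥ i₀,
        ∀ x ∈ Metric.ball (0 : EuclideanSpace ℝ (Fin n)) 1, ν i ≤ ‖x‖ →
          |u i x| ≤ C * (ν i) ^ (((n : ℝ) - 2 * k) / 2 - γ) / ‖x‖ ^ ((n : ℝ) - 2 * k - γ) := by
  intro γ hγ0 hγ
  have hn0 : 0 < n := by omega
  obtain ⟨C, hC, hev⟩ := prof_decay (κ := (n : ℝ) - 2 * k - γ) (by omega) hn hn0 hM hsetup hconc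
    (by linarith) (by linarith)
  obtain ⟨i₀, hi₀⟩ := eventually_atTop.1 hev
  obtain ⟨-, -, -, hr, -, -, -, -⟩ := hsetup
  obtain ⟨hν, -⟩ := hconc
  refine ⟨C, hC, i₀, fun i hi x hx hνx => ?_⟩
  have hνp := hν i
  have hx0 : 0 < ‖x‖ := hνp.trans_le hνx
  have hx1 : ‖x‖ < 1 := by simpa using hx
  have h := hi₀ i hi (‖x‖ / ν i) ⟨by rwa [le_div_iff₀ hνp, one_mul], by gcongr⟩
  rw [prof_eq hn0 _ hνp (hr i) x, Real.rpow_neg (by positivity), Real.div_rpow hx0.le hνp.le,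
    ← div_eq_mul_inv, div_div_eq_mul_div] at h
  have hνδ : 0 < ν i ^ (((n : ℝ) - 2 * k) / 2) := Real.rpow_pos_of_pos hνp _
  refine le_of_mul_le_mul_left (h.trans (le_of_eq ?_)) hνδ
  have e : ν i ^ ((n : ℝ) - 2 * k - γ)
      = ν i ^ (((n : ℝ) - 2 * k) / 2) * ν i ^ (((n : ℝ) - 2 * k) / 2 - γ) := by
    rw [← Real.rpow_add hνp]; ring_nf
  rw [e]
  ring
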